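/- Let K be algebraically closed, Δ a simplicial complex on X = {x_1,...,x_n} with F ⊆ G faces of Δ, where G = {x_{s+1},...,x_n} is a facet and F = {x_{t+1},...,x_n}, 1 ≤ s ≤ t < n. Suppose q_1,...,q_h generate I_Δ up to radical with q_i = Σ_{j=1}^s a_{ij}x_j and a_{ij}x_j ∈ I_Δ for all i,j, and suppose h + 1 > t. Let φ be the substitution x_k ↦ x_k^2, set q̄_i = φ(q_i) and ā_{ij} = φ(a_{ij})x_j (with ā_{ij} = 0 for j > s), let Ā = (ā_{ij})_{i,j=1,...,t} and A_1 = Ā + x_0·Id_t. Then, in R' = K[X ∪ {x_0}], I_{Δ'} = √( det A_1 − x_0^t, q̄_1 + x_0x_1, ..., q̄_t + x_0x_t, q̄_{t+1}, ..., q̄_h ), where Δ' = Δ ∪ co_{x_0}F. In particular ara I_{Δ'} ≤ h + 1. -/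

import Mathlib

open MvPolynomial

section Core

variable {V : Type*} [DecidableEq V]

/-- `Δ` is a simplicial complex on the vertex set `V`: every singleton is a face
and faces are closed under taking subsets. -/
def IsSimplicialComplex (Δ : Set (Finset V)) : Prop :=
  (∀ v : V, ({v} : Finset V) ∈ Δ) ∧ ∀ F ∈ Δ, ∀ G ⊆ F, G ∈ Δ

/-- The Stanley-Reisner ideal of `Δ` over `K`: generated by the squarefree monomials
whose support is not a face of `Δ`. -/
noncomputable def srIdeal (K : Type*) [Field K] (Δ : Set (Finset V)) :
    Ideal (MvPolynomial V K) :=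
  Ideal.span ((fun S : Finset V => ∏ v ∈ S, (X v : MvPolynomial V K)) '' {S | S ∉ Δ})

/-- The simplicial complex `Δ ∪ co_{x₀} F` on the vertex set `V ∪ {x₀}`,
realized as `Option V` with `none` playing the role of the new vertex `x₀`. -/
def coneUnion (Δ : Set (Finset V)) (F : Finset V) : Set (Finset (Option V)) :=
  ((fun G : Finset V => G.map Function.Embedding.some) '' Δ) ∪
    {G : Finset (Option V) | G ⊆ insert none (F.map Function.Embedding.some)}

/-- A facet is a maximal face. -/
def IsFacet (Δ : Set (Finset V)) (F : Finset V) : Prop :=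
  F ∈ Δ ∧ ∀ G ∈ Δ, F ⊆ G → F = G

/-- The prime ideal `P_F` generated by the variables not in `F`. -/
noncomputable def facePrime (K : Type*) [Field K] (F : Finset V) :
    Ideal (MvPolynomial V K) :=
  Ideal.span ((fun v : V => (X v : MvPolynomial V K)) '' {v : V | v ∉ F})

/-- The dimension of a simplicial complex. -/
noncomputable def scDim (Δ : Set (Finset V)) : ℕ := sSup (Finset.card '' Δ) - 1

/-- A subfacet of a (pure) complex: a face whose cardinality equals the dimension. -/
noncomputable def IsSubfacet (Δ : Set (Finset V)) (F : Finset V) : Prop :=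
  F ∈ Δ ∧ F.card = scDim Δ

end Core

/-- The arithmetical rank of an ideal: the least number of elements generating it
up to radical. -/
noncomputable def ara {R : Type*} [CommRing R] (I : Ideal R) : ℕ :=
  sInf {s : ℕ | ∃ a : Fin s → R, (Ideal.span (Set.range a)).radical = I.radical}

/-- The height of an ideal: the infimum of the heights of the primes containing it. -/
noncomputable def idealHeight {R : Type*} [CommRing R] (I : Ideal R) : ℕ∞ :=
  ⨅ p : {p : PrimeSpectrum R // I ≤ p.asIdeal}, Order.height p.1

section Stmt8

variable {n : ℕ} (K : Type*) [Field K]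

/-- The substitution `φ : xₖ ↦ xₖ²`. -/
noncomputable def sqSub : MvPolynomial (Fin n) K →ₐ[K] MvPolynomial (Fin n) K :=
  aeval fun v => (X v : MvPolynomial (Fin n) K) ^ 2

/-- The inclusion `R = K[x₁,…,xₙ] → R' = K[x₀,x₁,…,xₙ]`, with `none` playing
the role of the new variable `x₀`. -/
noncomputable def toR' : MvPolynomial (Fin n) K →ₐ[K] MvPolynomial (Option (Fin n)) K :=
  rename some

/-!
Write `I = I_Δ` and let `J` be the ideal on the right-hand side before taking the radical. Since `F`
is a face, `I_{Δ'} = I R' + (x₀xⱼ : xⱼ ∉ F)`, and `I_{Δ'}` is radical, being an intersection of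
face primes. Squaring the variables preserves `√(q₁,…,q_h) = I` and puts every entry of `Ā` into
`I`, while `Ā x = q̄`.

Modulo the entries of `Ā`, the determinant of `A₁` is `x₀ᵗ`; so `J ⊆ I_{Δ'}`. Conversely
`(A₁ x)ᵢ = q̄ᵢ + x₀xᵢ ∈ J`, and multiplying by the adjugate of `A₁` gives `det A₁ · xⱼ ∈ J`, hence
`x₀ᵗxⱼ ∈ J` and `x₀xⱼ ∈ √J`. Then `q̄ᵢ ∈ √J` as well, so `I_{Δ'} ⊆ √J`.
-/

section CommutativeAlgebra

open scoped Matrix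

variable {R : Type*} [CommRing R]

theorem radical_map_radical {S Φ : Type*} [CommRing S] [FunLike Φ R S] [RingHomClass Φ R S]
    (f : Φ) (I : Ideal R) :
    (I.radical.map f).radical = (I.map f).radical :=
  le_antisymm (Ideal.radical_le_radical_iff.mpr (Ideal.map_radical_le f))
    (Ideal.radical_mono (Ideal.map_mono Ideal.le_radical))

theorem ara_le_ncard {I : Ideal R} {S : Set R} (hS : S.Finite)
    (hI : (Ideal.span S).radical = I.radical) : ara I ≤ S.ncard := by
  obtain ⟨k, f, hf, rfl⟩ := hS.fin_param
  rw [Set.ncard_range_of_injective hf, Nat.card_fin]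
  exact Nat.sInf_le ⟨f, hI⟩

theorem ncard_range_le_natCard {ι α : Type*} [Finite ι] (f : ι → α) :
    (Set.range f).ncard ≤ Nat.card ι := by
  simpa only [Set.image_univ, Set.ncard_univ] using Set.ncard_image_le (f := f) Set.finite_univ

theorem ara_le_natCard_add_natCard_add_one {ι κ : Type*} [Finite ι] [Finite κ] {I : Ideal R}
    {d : R} {f : ι → R} {g : κ → R}
    (hI : (Ideal.span (insert d (Set.range f ∪ Set.range g))).radical = I.radical) :
    ara I ≤ Nat.card ι + Nat.card κ + 1 :=
  calc ara I ≤ (insert d (Set.range f ∪ Set.range g)).ncard := ara_le_ncard (Set.toFinite _) hI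
    _ ≤ (Set.range f ∪ Set.range g).ncard + 1 := Set.ncard_insert_le _ _
    _ ≤ (Set.range f).ncard + (Set.range g).ncard + 1 := by gcongr; exact Set.ncard_union_le _ _
    _ ≤ Nat.card ι + Nat.card κ + 1 := by gcongr <;> exact ncard_range_le_natCard _

variable {τ κ : Type*} [Fintype τ] [DecidableEq τ]

theorem det_add_scalar_sub_pow_mem {I : Ideal R} {B : Matrix τ τ R} (hB : ∀ i j, B i j ∈ I)
    (x : R) : (B + Matrix.scalar τ x).det - x ^ Fintype.card τ ∈ I := by
  have hmap : (B + Matrix.scalar τ x).map (Ideal.Quotient.mk I) =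
      (Matrix.scalar τ x).map (Ideal.Quotient.mk I) := by
    ext i j
    simp [Ideal.Quotient.eq_zero_iff_mem.mpr (hB i j)]
  rw [← Ideal.Quotient.eq, RingHom.map_det, RingHom.mapMatrix_apply, hmap,
    ← RingHom.mapMatrix_apply, ← RingHom.map_det, Matrix.scalar_apply,
    Matrix.det_diagonal, Finset.prod_const, Finset.card_univ]

theorem det_mul_mem_of_mulVec_mem {I : Ideal R} {M : Matrix τ τ R} {y : τ → R}
    (hM : ∀ i, (M *ᵥ y) i ∈ I) (j : τ) : M.det * y j ∈ I := by
  have hadj : M.det * y j = (M.adjugate *ᵥ (M *ᵥ y)) j := by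
    rw [Matrix.mulVec_mulVec, Matrix.adjugate_mul, Matrix.smul_mulVec, Matrix.one_mulVec,
      Pi.smul_apply, smul_eq_mul]
  rw [hadj]
  exact Ideal.sum_mem _ fun i _ => Ideal.mul_mem_left _ _ (hM i)

theorem mul_mem_radical_of_det_sub_pow_mem {I : Ideal R} {M : Matrix τ τ R} {y : τ → R} {x : R}
    {k : ℕ} (hdet : M.det - x ^ k ∈ I) (hM : ∀ i, (M *ᵥ y) i ∈ I) (j : τ) :
    x * y j ∈ I.radical := by
  have hpow : x ^ k * y j ∈ I := by
    have := sub_mem (det_mul_mem_of_mulVec_mem hM j) (I.mul_mem_right (y j) hdet)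
    rwa [sub_mul, sub_sub_cancel] at this
  refine ⟨k + 1, ?_⟩
  have : (x * y j) ^ (k + 1) = x * y j ^ k * (x ^ k * y j) := by ring
  exact this ▸ I.mul_mem_left _ hpow

theorem radical_span_insert_det_sub_pow {B : Matrix τ τ R} {y : τ → R} {p : κ → R} (x : R)
    (hB : ∀ i j, B i j ∈ (Ideal.span (Set.range (B *ᵥ y) ∪ Set.range p)).radical) :
    (Ideal.span (insert ((B + Matrix.scalar τ x).det - x ^ Fintype.card τ)
      (Set.range (fun i => (B *ᵥ y) i + x * y i) ∪ Set.range p))).radical =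
    (Ideal.span (Set.range (B *ᵥ y) ∪ Set.range p) ⊔
      Ideal.span (Set.range fun i => x * y i)).radical := by
  set J := Ideal.span (insert ((B + Matrix.scalar τ x).det - x ^ Fintype.card τ)
      (Set.range (fun i => (B *ᵥ y) i + x * y i) ∪ Set.range p))
  set Q := Ideal.span (Set.range (B *ᵥ y) ∪ Set.range p)
  set L := Ideal.span (Set.range fun i => x * y i)
  have hdetJ : (B + Matrix.scalar τ x).det - x ^ Fintype.card τ ∈ J :=
    Ideal.subset_span (Set.mem_insert _ _)
  have hrowJ (i : τ) : (B *ᵥ y) i + x * y i ∈ J := Ideal.subset_span (.inr (.inl ⟨i, rfl⟩))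
  have hmulJ (i : τ) : x * y i ∈ J.radical := by
    refine mul_mem_radical_of_det_sub_pow_mem hdetJ (fun i => ?_) i
    simpa [Matrix.add_mulVec, Matrix.smul_mulVec] using hrowJ i
  have hBy (i : τ) : (B *ᵥ y) i ∈ Q := Ideal.subset_span (.inl ⟨i, rfl⟩)
  have hxy (i : τ) : x * y i ∈ L := Ideal.subset_span ⟨i, rfl⟩
  apply le_antisymm <;> rw [Ideal.radical_le_radical_iff]
  · rw [Ideal.span_le]
    rintro _ (rfl | ⟨i, rfl⟩ | ⟨k, rfl⟩)
    · exact Ideal.radical_mono le_sup_left (det_add_scalar_sub_pow_mem hB x)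
    · exact Ideal.le_radical (Submodule.add_mem_sup (hBy i) (hxy i))
    · exact Ideal.le_radical (Ideal.mem_sup_left (Ideal.subset_span (.inr ⟨k, rfl⟩)))
  · refine sup_le (Ideal.span_le.mpr ?_) (Ideal.span_le.mpr (Set.range_subset_iff.mpr hmulJ))
    rintro _ (⟨i, rfl⟩ | ⟨k, rfl⟩)
    · simpa using sub_mem (Ideal.le_radical (hrowJ i)) (hmulJ i)
    · exact Ideal.le_radical (Ideal.subset_span (.inr (.inr ⟨k, rfl⟩)))

end CommutativeAlgebra

section StanleyReisner

open scoped Matrix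

variable {V : Type*} {Δ : Set (Finset V)} {F : Finset V}

theorem IsSimplicialComplex.isLowerSet (hΔ : IsSimplicialComplex Δ) : IsLowerSet Δ :=
  fun G H hHG hG => hΔ.2 G hG H hHG

variable {K : Type*} [Field K]

theorem prod_X_mem_srIdeal {S : Finset V} (hS : S ∉ Δ) :
    ∏ v ∈ S, (X v : MvPolynomial V K) ∈ srIdeal K Δ :=
  Ideal.subset_span ⟨S, hS, rfl⟩

theorem rename_some_prod_X (S : Finset V) :
    rename some (∏ v ∈ S, (X v : MvPolynomial V K)) =
      ∏ w ∈ S.map Function.Embedding.some, X w := by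
  simp only [map_prod, rename_X, Finset.prod_map, Function.Embedding.some_apply]

theorem prod_X_eq_monomial_indicator (S : Finset V) :
    ∏ v ∈ S, (X v : MvPolynomial V K) = monomial (Finsupp.indicator S fun _ _ => 1) 1 := by
  simpa using prod_X_pow (R := K) (fun _ => 1) S

theorem indicator_one_le_iff {S : Finset V} {m : V →₀ ℕ} :
    (Finsupp.indicator S fun _ _ => 1) ≤ m ↔ S ⊆ m.support := by
  classical
  refine forall_congr' fun v => ?_
  by_cases hv : v ∈ S <;> simp [Finsupp.indicator_apply, hv, Nat.one_le_iff_ne_zero]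

theorem mem_srIdeal_iff (hΔ : IsLowerSet Δ) {f : MvPolynomial V K} :
    f ∈ srIdeal K Δ ↔ ∀ m ∈ f.support, m.support ∉ Δ := by
  simp only [srIdeal, prod_X_eq_monomial_indicator]
  rw [← Set.image_image (fun m => monomial m (1 : K)), mem_ideal_span_monomial_image]
  refine forall₂_congr fun m _ => ?_
  simp only [Set.exists_mem_image, indicator_one_le_iff]
  exact ⟨fun ⟨S, hS, hSm⟩ hm => hS (hΔ hSm hm), fun hm => ⟨m.support, hm, subset_rfl⟩⟩

theorem mem_facePrime_iff {f : MvPolynomial V K} :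
    f ∈ facePrime K F ↔ ∀ m ∈ f.support, ¬ m.support ⊆ F := by
  rw [facePrime, mem_ideal_span_X_image]
  simp only [Finset.not_subset, Set.mem_ofPred_eq, Finsupp.mem_support_iff, and_comm]

theorem srIdeal_eq_iInf_facePrime (hΔ : IsLowerSet Δ) :
    srIdeal K Δ = ⨅ F : Δ, facePrime K F.1 := by
  ext f
  simp only [mem_srIdeal_iff hΔ, Submodule.mem_iInf, mem_facePrime_iff]
  exact ⟨fun hf F m hm hmF => hf m hm (hΔ hmF F.2),
    fun hf m hm hmΔ => hf ⟨m.support, hmΔ⟩ m hm subset_rfl⟩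

theorem facePrime_eq_ker (F : Finset V) :
    facePrime K F = RingHom.ker (aeval ((F : Set V).indicator (X (R := K)))) := by
  apply le_antisymm
  · rw [facePrime, Ideal.span_le]
    rintro _ ⟨v, hv, rfl⟩
    simpa using hv
  · intro f hf
    have hmk : (Ideal.Quotient.mkₐ K (facePrime K F)).comp
        (aeval ((F : Set V).indicator (X (R := K)))) = Ideal.Quotient.mkₐ K (facePrime K F) := by
      ext v
      by_cases hv : v ∈ F
      · simp [hv]
      · have hXv : X v ∈ facePrime K F := Ideal.subset_span ⟨v, hv, rfl⟩
        simp [hv, Ideal.Quotient.eq_zero_iff_mem.mpr hXv]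
    rw [← Ideal.Quotient.eq_zero_iff_mem, ← Ideal.Quotient.mkₐ_eq_mk K, ← hmk, AlgHom.comp_apply,
      RingHom.mem_ker.mp hf, map_zero]

theorem isPrime_facePrime (F : Finset V) : (facePrime K F).IsPrime := by
  rw [facePrime_eq_ker]
  exact RingHom.ker_isPrime _

theorem isRadical_srIdeal (hΔ : IsLowerSet Δ) : (srIdeal K Δ).IsRadical := by
  rw [srIdeal_eq_iInf_facePrime hΔ]
  exact Ideal.isRadical_iInf _ fun F => (isPrime_facePrime F.1).isRadical

theorem radical_map_expand_srIdeal (hΔ : IsLowerSet Δ) {k : ℕ} (hk : k ≠ 0) :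
    ((srIdeal K Δ).map (expand k)).radical = srIdeal K Δ := by
  have hpow (S : Finset V) : expand k (∏ v ∈ S, (X v : MvPolynomial V K)) = (∏ v ∈ S, X v) ^ k := by
    simp only [map_prod, expand_X, Finset.prod_pow]
  apply le_antisymm
  · rw [(isRadical_srIdeal hΔ).radical_le_iff, srIdeal, Ideal.map_span, Ideal.span_le]
    rintro _ ⟨_, ⟨S, hS, rfl⟩, rfl⟩
    exact hpow S ▸ Ideal.pow_mem_of_mem _ (prod_X_mem_srIdeal hS) k hk.bot_lt
  · rw [srIdeal, Ideal.span_le]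
    rintro _ ⟨S, hS, rfl⟩
    exact ⟨k, hpow S ▸ Ideal.mem_map_of_mem _ (prod_X_mem_srIdeal hS)⟩

theorem expand_mem_srIdeal (hΔ : IsLowerSet Δ) {k : ℕ} (hk : k ≠ 0) {f : MvPolynomial V K}
    (hf : f ∈ srIdeal K Δ) : expand k f ∈ srIdeal K Δ := by
  rw [← radical_map_expand_srIdeal hΔ hk]
  exact Ideal.le_radical (Ideal.mem_map_of_mem _ hf)

theorem expand_mul_X_mem_srIdeal (hΔ : IsLowerSet Δ) {k : ℕ} (hk : k ≠ 0) {f : MvPolynomial V K}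
    {v : V} (hf : f * X v ∈ srIdeal K Δ) : expand k f * X v ∈ srIdeal K Δ := by
  refine isRadical_srIdeal hΔ ⟨k, ?_⟩
  have hexpand : expand k f * X v ^ k ∈ srIdeal K Δ := by
    simpa only [map_mul, expand_X] using expand_mem_srIdeal hΔ hk hf
  rw [mul_pow]
  exact Ideal.mem_of_dvd _ (mul_dvd_mul_right (dvd_pow_self _ hk) _) hexpand

variable [DecidableEq V]

theorem isLowerSet_coneUnion (hΔ : IsLowerSet Δ) (F : Finset V) :
    IsLowerSet (coneUnion Δ F) := by
  rintro G H hHG (⟨G, hG, rfl⟩ | hGF)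
  · obtain ⟨H, hH, rfl⟩ := Finset.subset_map_iff.mp hHG
    exact .inl ⟨H, hΔ hH hG, rfl⟩
  · exact .inr (hHG.trans hGF)

theorem map_some_mem_coneUnion_iff (hΔ : IsLowerSet Δ) (hF : F ∈ Δ) {S : Finset V} :
    S.map Function.Embedding.some ∈ coneUnion Δ F ↔ S ∈ Δ := by
  refine ⟨?_, fun hS => .inl ⟨S, hS, rfl⟩⟩
  rintro (⟨G, hG, hGS⟩ | hSF)
  · rwa [← Finset.map_injective _ hGS]
  · refine hΔ (fun v hv => ?_) hF
    simpa using hSF (Finset.mem_map_of_mem _ hv)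

theorem mem_coneUnion_iff_of_none_mem {S : Finset (Option V)} (hS : none ∈ S) :
    S ∈ coneUnion Δ F ↔ ∀ v, some v ∈ S → v ∈ F := by
  constructor
  · rintro (⟨G, -, rfl⟩ | hSF) v hv
    · simp at hS
    · simpa using hSF hv
  · refine fun hSF => .inr fun w hw => ?_
    cases w with
    | none => exact Finset.mem_insert_self _ _
    | some v => simpa using hSF v hw

theorem srIdeal_coneUnion (hΔ : IsLowerSet Δ) (hF : F ∈ Δ) :
    srIdeal K (coneUnion Δ F) = (srIdeal K Δ).map (rename some) ⊔
      Ideal.span ((fun v => X none * X (some v)) '' (F : Set V)ᶜ) := by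
  apply le_antisymm
  · rw [srIdeal, Ideal.span_le]
    rintro _ ⟨S, hS, rfl⟩
    by_cases hnone : none ∈ S
    · obtain ⟨v, hvS, hvF⟩ : ∃ v, some v ∈ S ∧ v ∉ F := by
        simpa [mem_coneUnion_iff_of_none_mem hnone] using hS
      have hdvd : X none * X (some v) ∣ ∏ w ∈ S, (X w : MvPolynomial (Option V) K) := by
        rw [← Finset.prod_pair (Option.some_ne_none v).symm]
        exact Finset.prod_dvd_prod_of_subset _ _ _ (by simp [Finset.insert_subset_iff, *])
      exact Ideal.mem_of_dvd _ hdvd (Ideal.mem_sup_right (Ideal.subset_span ⟨v, hvF, rfl⟩))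
    · obtain ⟨S, rfl⟩ : ∃ S' : Finset V, S'.map Function.Embedding.some = S :=
        ⟨S.eraseNone, by rw [Finset.map_some_eraseNone, Finset.erase_eq_of_notMem hnone]⟩
      have hSΔ : S ∉ Δ := mt (map_some_mem_coneUnion_iff hΔ hF).mpr hS
      simpa only [rename_some_prod_X, SetLike.mem_coe] using
        Ideal.mem_sup_left (Ideal.mem_map_of_mem (rename some) (prod_X_mem_srIdeal hSΔ))
  · refine sup_le ?_ (Ideal.span_le.mpr ?_)
    · rw [srIdeal, Ideal.map_span, Ideal.span_le]
      rintro _ ⟨_, ⟨S, hS, rfl⟩, rfl⟩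
      exact rename_some_prod_X (K := K) S ▸
        prod_X_mem_srIdeal (mt (map_some_mem_coneUnion_iff hΔ hF).mp hS)
    · rintro _ ⟨v, hv, rfl⟩
      have hpair : {none, some v} ∉ coneUnion Δ F := by
        simpa [mem_coneUnion_iff_of_none_mem] using hv
      simpa only [Finset.prod_pair (Option.some_ne_none v).symm, SetLike.mem_coe] using
        prod_X_mem_srIdeal (K := K) hpair

variable {τ κ : Type*} [Fintype τ] [DecidableEq τ]

theorem srIdeal_coneUnion_eq_radical_span (hΔ : IsLowerSet Δ) (hF : F ∈ Δ) {v : τ → V}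
    (hv : Set.range v = (F : Set V)ᶜ) {B : Matrix τ τ (MvPolynomial V K)}
    {q : τ → MvPolynomial V K} {p : κ → MvPolynomial V K} (hB : ∀ i j, B i j ∈ srIdeal K Δ)
    (hq : q = B *ᵥ fun j => X (v j))
    (hrad : (Ideal.span (Set.range q ∪ Set.range p)).radical = srIdeal K Δ) :
    srIdeal K (coneUnion Δ F) =
      (Ideal.span
        (insert ((B.map (rename some) + Matrix.scalar τ (X none)).det - X none ^ Fintype.card τ)
          (Set.range (fun i => rename some (q i) + X none * X (some (v i))) ∪
            Set.range fun i => rename some (p i)))).radical := by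
  have hq' : (fun i => rename some (q i)) = B.map (rename some) *ᵥ fun j => X (some (v j)) := by
    ext1 i
    simp only [hq, Matrix.mulVec, dotProduct, map_sum, map_mul, rename_X, Matrix.map_apply]
  have hmap : (Ideal.span (Set.range q ∪ Set.range p)).map (rename some) =
      Ideal.span (Set.range (B.map (rename some) *ᵥ fun j => X (some (v j))) ∪
        Set.range fun i => rename some (p i)) := by
    rw [Ideal.map_span, Set.image_union, ← Set.range_comp', ← Set.range_comp', hq']
  have hBmap (i j : τ) : B.map (rename some) i j ∈
      ((Ideal.span (Set.range q ∪ Set.range p)).map (rename some)).radical :=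
    Ideal.map_radical_le _ (Ideal.mem_map_of_mem _ (hrad ▸ hB i j))
  have hspan : Ideal.span ((fun w => X none * X (some w)) '' (F : Set V)ᶜ) =
      Ideal.span (Set.range fun i => X none * (X (some (v i)) : MvPolynomial (Option V) K)) := by
    rw [← hv, ← Set.range_comp']
  calc srIdeal K (coneUnion Δ F)
      = (srIdeal K (coneUnion Δ F)).radical :=
        (isRadical_srIdeal (isLowerSet_coneUnion hΔ F)).radical.symm
    _ = ((Ideal.span (Set.range q ∪ Set.range p)).map (rename some) ⊔
          Ideal.span (Set.range fun i => X none * X (some (v i)))).radical := by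
        rw [srIdeal_coneUnion hΔ hF, hspan, ← hrad, Ideal.radical_sup, radical_map_radical,
          ← Ideal.radical_sup]
    _ = _ := by
        rw [hmap] at hBmap ⊢
        simp_rw [← radical_span_insert_det_sub_pow (X none) hBmap, ← hq']

theorem srIdeal_coneUnion_eq_radical_span_expand_two (hΔ : IsLowerSet Δ) (hF : F ∈ Δ) {v : τ → V}
    (hv : Set.range v = (F : Set V)ᶜ) {A : Matrix τ τ (MvPolynomial V K)}
    {q : τ → MvPolynomial V K} {p : κ → MvPolynomial V K}
    (hA : ∀ i j, A i j * X (v j) ∈ srIdeal K Δ) (hq : ∀ i, q i = ∑ j, A i j * X (v j))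
    (hrad : (Ideal.span (Set.range q ∪ Set.range p)).radical = srIdeal K Δ) :
    srIdeal K (coneUnion Δ F) =
      (Ideal.span
        (insert
          (((Matrix.of fun i j => expand 2 (A i j) * X (v j)).map (rename some) +
              Matrix.scalar τ (X none)).det - X none ^ Fintype.card τ)
          (Set.range (fun i => rename some (expand 2 (q i)) + X none * X (some (v i))) ∪
            Set.range fun i => rename some (expand 2 (p i))))).radical := by
  refine srIdeal_coneUnion_eq_radical_span hΔ hF hv
    (fun i j => expand_mul_X_mem_srIdeal hΔ two_ne_zero (hA i j)) ?_ ?_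
  · ext1 i
    simp only [hq, map_sum, map_mul, expand_X, sq, ← mul_assoc, Matrix.mulVec, dotProduct,
      Matrix.of_apply]
  · rw [Set.range_comp' (expand 2) q, Set.range_comp' (expand 2) p, ← Set.image_union,
      ← Ideal.map_span, ← radical_map_radical, hrad, radical_map_expand_srIdeal hΔ two_ne_zero]

end StanleyReisner

section InitialSegments

theorem sum_filter_lt_eq_sum_castLE {M : Type*} [AddCommMonoid M] {s t : ℕ} (hst : s ≤ t)
    (htn : t ≤ n) (f : Fin n → M) :
    ∑ j ∈ Finset.univ.filter (fun j : Fin n => (j : ℕ) < s), f j =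
      ∑ j : Fin t, if (j : ℕ) < s then f (Fin.castLE htn j) else 0 := by
  rw [← Finset.sum_filter]
  refine (Finset.sum_nbij (Fin.castLE htn) (by simp) (Fin.castLE_injective htn).injOn ?_
    fun _ _ => rfl).symm
  exact fun j hj => ⟨⟨j, (by simpa using hj : (j : ℕ) < s).trans_le hst⟩, by simpa using hj, rfl⟩

theorem range_castLE_eq_compl_filter_le {t : ℕ} (htn : t ≤ n) :
    Set.range (Fin.castLE htn) =
      (Finset.univ.filter fun i : Fin n => t ≤ (i : ℕ) : Set (Fin n))ᶜ := by
  ext i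
  simp [Fin.range_castLE]

theorem range_castLE_union_range_subtype {α : Type*} {t h : ℕ} (hth : t ≤ h) (f : Fin h → α) :
    (Set.range fun i : Fin t => f (Fin.castLE hth i)) ∪
      (Set.range fun i : {i : Fin h // t ≤ (i : ℕ)} => f i.1) = Set.range f := by
  rw [Set.range_comp' f, Set.range_comp' f, ← Set.image_union, Fin.range_castLE,
    Subtype.range_coe_subtype, ← Set.image_univ]
  congr 1
  ext i
  simp [lt_or_ge]

theorem natCard_fin_add_natCard_subtype_le {t h : ℕ} (hth : t ≤ h) :
    Nat.card (Fin t) + Nat.card {i : Fin h // t ≤ (i : ℕ)} = h := by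
  have hcompl := Set.ncard_add_ncard_compl (Set.range (Fin.castLE hth))
  rw [Set.ncard_range_of_injective (Fin.castLE_injective hth), Fin.range_castLE, Nat.card_fin h,
    Set.compl_ofPred] at hcompl
  simp only [not_lt] at hcompl
  exact hcompl

end InitialSegments

theorem srIdeal_coneUnion_eq_radical_case1_general {Δ : Set (Finset (Fin n))} (hΔ : IsLowerSet Δ)
    {s t : ℕ} (hst : s ≤ t) (htn : t ≤ n)
    (hF : (Finset.univ.filter fun i : Fin n => t ≤ (i : ℕ)) ∈ Δ)
    {h : ℕ} (hth : t ≤ h)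
    (q : Fin h → MvPolynomial (Fin n) K) (a : Fin h → Fin n → MvPolynomial (Fin n) K)
    (hdecomp : ∀ i, q i =
      ∑ j ∈ Finset.univ.filter (fun j : Fin n => (j : ℕ) < s), a i j * X j)
    (hmem : ∀ (i : Fin h) (j : Fin n), (j : ℕ) < s → a i j * X j ∈ srIdeal K Δ)
    (hrad : (Ideal.span (Set.range q)).radical = srIdeal K Δ) :
    srIdeal K (coneUnion Δ (Finset.univ.filter fun i : Fin n => t ≤ (i : ℕ))) =
      (Ideal.span
        (insert
          ((Matrix.of fun i j : Fin t =>
              toR' K (if (j : ℕ) < s then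
                  sqSub K (a (Fin.castLE hth i) (Fin.castLE htn j)) * X (Fin.castLE htn j)
                else 0) +
              if i = j then X none else 0).det - X none ^ t)
          ((Set.range fun i : Fin t =>
              toR' K (sqSub K (q (Fin.castLE hth i))) +
                X none * X (some (Fin.castLE htn i))) ∪
           (Set.range fun i : {i : Fin h // t ≤ (i : ℕ)} =>
              toR' K (sqSub K (q i.1)))))).radical
    ∧ ara (srIdeal K (coneUnion Δ (Finset.univ.filter fun i : Fin n => t ≤ (i : ℕ)))) ≤
        h + 1 := by
  let A : Matrix (Fin t) (Fin t) (MvPolynomial (Fin n) K) := Matrix.of fun i j =>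
    if (j : ℕ) < s then a (Fin.castLE hth i) (Fin.castLE htn j) else 0
  have hA (i j : Fin t) : A i j * X (Fin.castLE htn j) ∈ srIdeal K Δ := by
    simp only [A, Matrix.of_apply]
    split_ifs with hj
    · exact hmem _ _ hj
    · rw [zero_mul]
      exact zero_mem _
  have hq (i : Fin t) : q (Fin.castLE hth i) = ∑ j, A i j * X (Fin.castLE htn j) := by
    simp only [hdecomp, sum_filter_lt_eq_sum_castLE hst htn, A, Matrix.of_apply, ite_mul, zero_mul]
  have hexpand (i j : Fin t) : expand 2 (A i j) * X (Fin.castLE htn j) =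
      if (j : ℕ) < s then sqSub K (a (Fin.castLE hth i) (Fin.castLE htn j)) * X (Fin.castLE htn j)
      else 0 := by
    simp only [A, Matrix.of_apply, apply_ite (expand 2), map_zero, ite_mul, zero_mul]
    rfl
  rw [← range_castLE_union_range_subtype hth q] at hrad
  have hcone := srIdeal_coneUnion_eq_radical_span_expand_two hΔ hF
    (range_castLE_eq_compl_filter_le htn) hA hq hrad
  simp_rw [hexpand, Fintype.card_fin] at hcone
  -- `sqSub K` and `toR' K` are definitionally `expand 2` and `rename some`.
  refine ⟨hcone, ?_⟩
  rw [← natCard_fin_add_natCard_subtype_le hth]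
  exact ara_le_natCard_add_natCard_add_one (by rw [hcone, Ideal.radical_idem])

/-- Case 1 of Theorem 1: here the variable `xⱼ` (for `1 ≤ j ≤ n`) is the
variable with index `j-1 : Fin n`, so `G = {x_{s+1},…,xₙ}` is the set of indices `≥ s` and
`F = {x_{t+1},…,xₙ}` the set of indices `≥ t`.  Suppose `q₁,…,q_h` generate `I_Δ` up to
radical, `qᵢ = ∑_{j=1}^s aᵢⱼxⱼ` with `aᵢⱼxⱼ ∈ I_Δ`, and `h + 1 > t`.  With
`q̄ᵢ = φ(qᵢ)`, `āᵢⱼ = φ(aᵢⱼ)xⱼ` (zero for `j > s`), `Ā = (āᵢⱼ)_{i,j≤t}` and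
`A₁ = Ā + x₀·Id_t`, the ideal `I_{Δ'}` is the radical of the ideal generated by
`det A₁ − x₀ᵗ`, `q̄ᵢ + x₀xᵢ` (`1 ≤ i ≤ t`) and `q̄ᵢ` (`t < i ≤ h`); in particular
`ara I_{Δ'} ≤ h + 1`. -/
theorem srIdeal_coneUnion_eq_radical_case1 [IsAlgClosed K]
    (Δ : Set (Finset (Fin n))) (hΔ : IsSimplicialComplex Δ)
    (s t : ℕ) (hs : 1 ≤ s) (hst : s ≤ t) (htn : t < n)
    (hG : IsFacet Δ (Finset.univ.filter fun i : Fin n => s ≤ (i : ℕ)))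
    (hF : (Finset.univ.filter fun i : Fin n => t ≤ (i : ℕ)) ∈ Δ)
    {h : ℕ} (hth : t < h + 1)
    (q : Fin h → MvPolynomial (Fin n) K) (a : Fin h → Fin n → MvPolynomial (Fin n) K)
    (hdecomp : ∀ i, q i =
      ∑ j ∈ Finset.univ.filter (fun j : Fin n => (j : ℕ) < s), a i j * X j)
    (hmem : ∀ (i : Fin h) (j : Fin n), (j : ℕ) < s → a i j * X j ∈ srIdeal K Δ)
    (hrad : (Ideal.span (Set.range q)).radical = srIdeal K Δ) :
    srIdeal K (coneUnion Δ (Finset.univ.filter fun i : Fin n => t ≤ (i : ℕ))) =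
      (Ideal.span
        (insert
          ((Matrix.of fun i j : Fin t =>
              toR' K (if ((j : ℕ) < s) then
                  sqSub K (a (Fin.castLE (Nat.lt_succ_iff.mp hth) i) (Fin.castLE htn.le j)) *
                    X (Fin.castLE htn.le j)
                else 0) +
              if i = j then X none else 0).det - X none ^ t)
          ((Set.range fun i : Fin t =>
              toR' K (sqSub K (q (Fin.castLE (Nat.lt_succ_iff.mp hth) i))) +
                X none * X (some (Fin.castLE htn.le i))) ∪
           (Set.range fun i : {i : Fin h // t ≤ (i : ℕ)} =>
              toR' K (sqSub K (q i.1)))))).radical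
    ∧ ara (srIdeal K (coneUnion Δ (Finset.univ.filter fun i : Fin n => t ≤ (i : ℕ)))) ≤
        h + 1 :=
  srIdeal_coneUnion_eq_radical_case1_general K hΔ.isLowerSet hst htn.le hF
    (Nat.lt_succ_iff.mp hth) q a hdecomp hmem hrad

end Stmt8
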